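/- Let n ≥ 3 be an odd integer, let k ≥ 2 be an integer, and set d = 4(1 − 4k^n)^n. Then d + 4 = 4(1 − (4k^n − 1)^n), so ℚ(√(d + 4)) = ℚ(√(1 − (4k^n − 1)^n)), and n divides the class number of the imaginary quadratic field ℚ(√(d + 4)). -/

import Mathlib

/-- The quadratic field `ℚ(√d)`, realized as the subfield of `ℂ` generated over `ℚ`
by a complex square root of `d`. -/
noncomputable def Qsqrt (d : ℤ) : IntermediateField ℚ ℂ :=
  IntermediateField.adjoin ℚ {((d : ℂ) ^ ((1 : ℂ) / 2))}

/-- The class number of `ℚ(√d)`: the order of the ideal class group of its ring of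
integers. -/
noncomputable def classNumSqrt (d : ℤ) : ℕ :=
  Nat.card (ClassGroup (NumberField.RingOfIntegers (Qsqrt d)))

/-!
Put `m = 4kⁿ - 1` and write `1 - mⁿ = b²d` with `d` squarefree. Then `d ≡ 2 (mod 4)`, so `ℤ√d` is
the ring of integers of `ℚ(√(1 - mⁿ))`, and the coprime conjugate elements `1 ± b√d` have product
`mⁿ`; hence `(1 + b√d) = Iⁿ` for an ideal `I`. If the class of `I` did not have order exactly `n`,
then, the units being `±1`, some `γ` would satisfy `γᵖ = 1 + b√d` for a prime `p ∣ n`.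

Such a `γ` has norm `m^(n/p) ≡ -1 (mod 4kⁿ)` and its real part divides `1`. Modulo `4kⁿ` its powers
therefore have the same real parts as those of `±(1 + √2)`, whose norm is also `-1`. The real part
of `(1 + √2)^(2r+1)` is `(-1)^r + 4 P_r P_{r+1}` with Pell numbers `P_r`, so `γᵖ` having real part
`1` forces `kⁿ ∣ P_r P_{r+1}` with `p = 2r + 1`. This is impossible: the two factors are coprime,
positive and less than `2ⁿ`.
-/

section ClassGroup

variable {R : Type*} [CommRing R] [IsDedekindDomain R]

theorem exists_ideal_pow_eq_span_of_mul_eq_pow {a b c : R} {n : ℕ} (hab : IsCoprime a b)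
    (h : a * b = c ^ n) : ∃ I : Ideal R, Ideal.span {a} = I ^ n := by
  let _ : GCDMonoid (Ideal R) := UniqueFactorizationMonoid.toGCDMonoid _
  refine exists_eq_pow_of_mul_eq_pow_of_coprime (b := Ideal.span {b}) (c := Ideal.span {c}) ?_ ?_
  · exact (Ideal.isCoprime_span_singleton_iff a b).2 hab
  · rw [Ideal.span_singleton_mul_span_singleton, h, Ideal.span_singleton_pow]

theorem mk0_pow_eq_one_iff {I : Ideal R} (hI : I ∈ nonZeroDivisors (Ideal R)) (j : ℕ) :
    ClassGroup.mk0 ⟨I, hI⟩ ^ j = 1 ↔ ∃ b : R, I ^ j = Ideal.span {b} := by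
  rw [← map_pow, SubmonoidClass.mk_pow, ClassGroup.mk0_eq_one_iff]
  exact Submodule.isPrincipal_iff _

theorem orderOf_mk0_eq_of_pow_eq_span {a : R} {n : ℕ} (hn : 0 < n) {I : Ideal R}
    (hI : I ∈ nonZeroDivisors (Ideal R)) (ha : Ideal.span {a} = I ^ n)
    (hroot : ∀ p : ℕ, p.Prime → p ∣ n → ∀ b : R, ¬ Associated (b ^ p) a) :
    orderOf (ClassGroup.mk0 ⟨I, hI⟩) = n := by
  refine orderOf_eq_of_pow_and_pow_div_prime hn ?_ fun p hp hpn hone => ?_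
  · exact (mk0_pow_eq_one_iff hI n).2 ⟨a, ha.symm⟩
  · obtain ⟨b, hb⟩ := (mk0_pow_eq_one_iff hI _).1 hone
    refine hroot p hp hpn b (Ideal.span_singleton_eq_span_singleton.1 ?_)
    rw [← Ideal.span_singleton_pow, ← hb, ← pow_mul, Nat.div_mul_cancel hpn, ha]

theorem dvd_card_classGroup_of_mul_eq_pow {a b c : R} {n : ℕ} (hn : 0 < n) (ha : a ≠ 0)
    (hab : IsCoprime a b) (h : a * b = c ^ n)
    (hroot : ∀ p : ℕ, p.Prime → p ∣ n → ∀ r : R, ¬ Associated (r ^ p) a) :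
    n ∣ Nat.card (ClassGroup R) := by
  obtain ⟨I, hI⟩ := exists_ideal_pow_eq_span_of_mul_eq_pow hab h
  have hI0 : I ≠ 0 := by
    rintro rfl
    exact ha (by simpa [hn.ne'] using hI)
  rw [← orderOf_mk0_eq_of_pow_eq_span hn (mem_nonZeroDivisors_of_ne_zero hI0) hI hroot]
  exact orderOf_dvd_natCard _

end ClassGroup

theorem exists_int_eq_of_squarefree_mul_sq {d : ℤ} (hd : Squarefree d) {q : ℚ} {c : ℤ}
    (h : (d : ℚ) * q ^ 2 = c) : ∃ a : ℤ, (a : ℚ) = q := by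
  have hd0 : (d : ℚ) ≠ 0 := mod_cast hd.ne_zero
  have hint : IsIntegral ℤ ((d : ℚ) * q) := by
    refine IsIntegral.of_pow two_pos ?_
    have : ((d : ℚ) * q) ^ 2 = (d * c : ℤ) := by push_cast; linear_combination (d : ℚ) * h
    rw [this]
    exact isIntegral_algebraMap
  obtain ⟨e, he⟩ := IsIntegrallyClosed.isIntegral_iff.1 hint
  rw [eq_intCast] at he
  have hsq : d ∣ e ^ 2 := ⟨c, by
    have : ((e ^ 2 : ℤ) : ℚ) = (d * c : ℤ) := by
      push_cast; rw [he]; linear_combination (d : ℚ) * h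
    exact_mod_cast this⟩
  obtain ⟨a, rfl⟩ := (hd.dvd_pow_iff_dvd two_ne_zero).1 hsq
  refine ⟨a, mul_left_cancel₀ hd0 ?_⟩
  exact_mod_cast he

theorem even_and_even_of_four_dvd_sq_sub {d a b : ℤ} (hd : Squarefree d) (hd4 : d % 4 ≠ 1)
    (h : 4 ∣ a ^ 2 - d * b ^ 2) : Even a ∧ Even b := by
  have hd0 : d % 4 ≠ 0 := fun h0 => by
    have := hd 2 (by omega)
    norm_num [Int.isUnit_iff] at this
  have hsq (c : ℤ) : c ^ 2 % 4 = if Even c then 0 else 1 := by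
    split_ifs with hc
    · exact Int.emod_eq_zero_of_dvd (pow_dvd_pow_of_dvd hc.two_dvd 2)
    · exact Int.sq_mod_four_eq_one_of_odd (Int.not_even_iff_odd.1 hc)
  have hmod : (a ^ 2 % 4 - d % 4 * (b ^ 2 % 4)) % 4 = 0 := by
    rw [← Int.emod_eq_zero_of_dvd h]
    simp [Int.sub_emod, Int.mul_emod]
  rw [hsq, hsq] at hmod
  split_ifs at hmod with ha hb hb
  all_goals first | exact ⟨ha, hb⟩ | omega

theorem not_isSquare_of_squarefree {d : ℤ} (hd : Squarefree d) (hd1 : d ≠ 1) : ¬ IsSquare d := by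
  rintro ⟨s, rfl⟩
  exact hd1 (Int.isUnit_mul_self (hd s dvd_rfl))

section Integrality

variable {K : Type*} [Field K] [CharZero K] {d : ℤ} {ω : K} {x y : ℚ}

theorem isIntegral_sub_of_isIntegral_add (hd : ¬ IsSquare d) (hω : ω * ω = d)
    (h : IsIntegral ℤ (x + y * ω : K)) : IsIntegral ℤ (x - y * ω : K) := by
  have : Fact (∀ r : ℚ, r ^ 2 ≠ d + 0 * r) := ⟨fun r hr =>
    hd (Rat.isSquare_intCast_iff.1 ⟨r, by linear_combination -hr⟩)⟩
  -- Conjugation on `ℚ[√d]` is transported to `K` along the embedding `f`.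
  let f : QuadraticAlgebra ℚ (d : ℚ) 0 →ₐ[ℚ] K :=
    QuadraticAlgebra.lift ⟨ω, by simp [hω, Algebra.smul_def]⟩
  have hf (u v : ℚ) : f ⟨u, v⟩ = u + v * ω := by
    change u • (1 : K) + v • ω = _
    simp [Algebra.smul_def]
  rw [← hf] at h
  have hz := (isIntegral_algHom_iff (f.restrictScalars ℤ) f.toRingHom.injective).1 h
  have hstar := (hz.map (starRingEnd _).toIntAlgHom).map f.toRingHom.toIntAlgHom
  have hconj : (x - y * ω : K) = f (star ⟨x, y⟩) := by
    rw [QuadraticAlgebra.star_mk, hf]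
    push_cast
    ring
  rw [hconj]
  exact hstar

theorem exists_int_eq_of_isIntegral_add_mul (hd : Squarefree d) (hd4 : d % 4 ≠ 1)
    (hω : ω * ω = d) (h : IsIntegral ℤ (x + y * ω : K)) : ∃ a b : ℤ, (a : ℚ) = x ∧ (b : ℚ) = y := by
  have hd1 : d ≠ 1 := by
    rintro rfl
    exact hd4 rfl
  have hconj := isIntegral_sub_of_isIntegral_add (not_isSquare_of_squarefree hd hd1) hω h
  have hrat {q : ℚ} (hq : IsIntegral ℤ (q : K)) : ∃ a : ℤ, (a : ℚ) = q :=
    IsIntegrallyClosed.isIntegral_iff.1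
      ((isIntegral_algebraMap_iff (algebraMap ℚ K).injective).1 hq)
  obtain ⟨t, ht⟩ : ∃ t : ℤ, (t : ℚ) = 2 * x := by
    have htrace : ((2 * x : ℚ) : K) = (x + y * ω) + (x - y * ω) := by push_cast; ring
    exact hrat (htrace ▸ h.add hconj)
  obtain ⟨m, hm⟩ : ∃ m : ℤ, (m : ℚ) = x ^ 2 - d * y ^ 2 := by
    have hnorm : ((x ^ 2 - d * y ^ 2 : ℚ) : K) = (x + y * ω) * (x - y * ω) := by
      push_cast
      linear_combination (y : K) ^ 2 * hω
    exact hrat (hnorm ▸ h.mul hconj)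
  obtain ⟨s, hs⟩ : ∃ s : ℤ, (s : ℚ) = 2 * y := by
    refine exists_int_eq_of_squarefree_mul_sq hd (c := t ^ 2 - 4 * m) ?_
    push_cast
    rw [ht, hm]
    ring
  have hdvd : 4 ∣ t ^ 2 - d * s ^ 2 := ⟨m, by
    have : ((t ^ 2 - d * s ^ 2 : ℤ) : ℚ) = (4 * m : ℤ) := by
      push_cast; rw [ht, hs, hm]; ring
    exact_mod_cast this⟩
  obtain ⟨⟨a, rfl⟩, b, rfl⟩ := even_and_even_of_four_dvd_sq_sub hd hd4 hdvd
  push_cast at ht hs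
  exact ⟨a, b, by linarith, by linarith⟩

end Integrality

namespace Qsqrt

/-- The distinguished square root of `d` generating `ℚ(√d)`, as an element of that field: the
principal branch of `d ^ (1 / 2)` in `ℂ`. -/
noncomputable def root (d : ℤ) : Qsqrt d :=
  ⟨(d : ℂ) ^ ((1 : ℂ) / 2), IntermediateField.mem_adjoin_simple_self ℚ _⟩

theorem root_mul_root (d : ℤ) : root d * root d = d := by
  apply Subtype.ext
  simp [root, ← sq]

theorem coe_root_mul_coe_root (d : ℤ) : (root d * root d : ℂ) = d :=
  congrArg Subtype.val (root_mul_root d)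

theorem isIntegral_coe_root (d : ℤ) : IsIntegral ℤ (root d : ℂ) := by
  refine IsIntegral.of_pow two_pos ?_
  rw [sq, coe_root_mul_coe_root]
  exact isIntegral_algebraMap (x := d)

instance (d : ℤ) : NumberField (Qsqrt d) where
  to_finiteDimensional :=
    IntermediateField.adjoin.finiteDimensional (isIntegral_coe_root d).tower_top

theorem exists_rat_add_mul_root {d : ℤ} (z : Qsqrt d) : ∃ x y : ℚ, z = x + y * root d := by
  suffices ∀ w ∈ Algebra.adjoin ℚ {(root d : ℂ)}, ∃ x y : ℚ, w = x + y * root d by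
    have hz : (z : ℂ) ∈ Algebra.adjoin ℚ {(root d : ℂ)} := by
      rw [← IntermediateField.adjoin_simple_toSubalgebra_of_isAlgebraic
        (isIntegral_coe_root d).tower_top.isAlgebraic]
      exact z.2
    obtain ⟨x, y, hxy⟩ := this z hz
    exact ⟨x, y, Subtype.ext (by simpa using hxy)⟩
  intro w hw
  induction hw using Algebra.adjoin_induction with
  | mem w hw => exact ⟨0, 1, by simpa using hw⟩
  | algebraMap q => exact ⟨q, 0, by simp⟩
  | add _ _ _ _ hu hv =>
    obtain ⟨x, y, rfl⟩ := hu
    obtain ⟨x', y', rfl⟩ := hv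
    exact ⟨x + x', y + y', by push_cast; ring⟩
  | mul _ _ _ _ hu hv =>
    obtain ⟨x, y, rfl⟩ := hu
    obtain ⟨x', y', rfl⟩ := hv
    exact ⟨x * x' + d * y * y', x * y' + y * x', by
      push_cast; linear_combination (y * y' : ℂ) * coe_root_mul_coe_root d⟩

theorem le_of_eq_sq_mul {d e : ℤ} (c : ℚ) (h : (d : ℚ) = c ^ 2 * e) : Qsqrt d ≤ Qsqrt e := by
  have hsq : (root d : ℂ) ^ 2 = (c * root e : Qsqrt e) ^ 2 := by
    have hde : (d : ℂ) = c ^ 2 * e := mod_cast congrArg (Rat.cast : ℚ → ℂ) h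
    push_cast
    linear_combination coe_root_mul_coe_root d + hde - (c : ℂ) ^ 2 * coe_root_mul_coe_root e
  refine IntermediateField.adjoin_simple_le_iff.2 ?_
  change (root d : ℂ) ∈ Qsqrt e
  rcases sq_eq_sq_iff_eq_or_eq_neg.1 hsq with h | h <;> rw [h]
  · exact SetLike.coe_mem _
  · exact neg_mem (SetLike.coe_mem _)

theorem sq_mul {b : ℤ} (hb : b ≠ 0) (d : ℤ) : Qsqrt (b ^ 2 * d) = Qsqrt d := by
  have hb' : (b : ℚ) ≠ 0 := mod_cast hb
  apply le_antisymm
  · exact le_of_eq_sq_mul b (by push_cast; ring)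
  · exact le_of_eq_sq_mul (b⁻¹) (by push_cast; field_simp)

noncomputable instance (d : ℤ) : Algebra (ℤ√d) (Qsqrt d) :=
  (Zsqrtd.lift ⟨root d, root_mul_root d⟩).toAlgebra

theorem algebraMap_zsqrtd_apply {d : ℤ} (z : ℤ√d) :
    algebraMap (ℤ√d) (Qsqrt d) z = z.re + z.im * root d :=
  rfl

theorem isIntegralClosure_zsqrtd {d : ℤ} (hd : Squarefree d) (hd4 : d % 4 ≠ 1) :
    IsIntegralClosure (ℤ√d) ℤ (Qsqrt d) where
  algebraMap_injective :=
    Zsqrtd.lift_injective _ fun s hs =>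
      not_isSquare_of_squarefree hd (by rintro rfl; exact hd4 rfl) ⟨s, hs⟩
  isIntegral_iff {z} := by
    constructor
    · intro hz
      obtain ⟨x, y, rfl⟩ := exists_rat_add_mul_root z
      obtain ⟨a, b, rfl, rfl⟩ :=
        exists_int_eq_of_isIntegral_add_mul hd hd4 (root_mul_root d) hz
      exact ⟨⟨a, b⟩, by simp [algebraMap_zsqrtd_apply]⟩
    · rintro ⟨w, rfl⟩
      have hroot : IsIntegral ℤ (root d) :=
        (isIntegral_algHom_iff ((Qsqrt d).val.restrictScalars ℤ) Subtype.val_injective).1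
          (isIntegral_coe_root d)
      exact isIntegral_algebraMap.add (isIntegral_algebraMap.mul hroot)

theorem isDomain_zsqrtd {d : ℤ} (hd : Squarefree d) (hd4 : d % 4 ≠ 1) : IsDomain (ℤ√d) :=
  (isIntegralClosure_zsqrtd hd hd4).algebraMap_injective.isDomain (algebraMap (ℤ√d) (Qsqrt d))

theorem isDedekindDomain_zsqrtd {d : ℤ} (hd : Squarefree d) (hd4 : d % 4 ≠ 1) :
    IsDedekindDomain (ℤ√d) :=
  have := isIntegralClosure_zsqrtd hd hd4
  have := isDomain_zsqrtd hd hd4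
  IsIntegralClosure.isDedekindDomain ℤ ℚ (Qsqrt d) (ℤ√d)

end Qsqrt

theorem classNumSqrt_eq_card_classGroup {d : ℤ} [IsDomain (ℤ√d)] (hd : Squarefree d)
    (hd4 : d % 4 ≠ 1) : classNumSqrt d = Nat.card (ClassGroup (ℤ√d)) :=
  have := Qsqrt.isIntegralClosure_zsqrtd hd hd4
  Nat.card_congr (ClassGroup.mulEquiv (NumberField.RingOfIntegers.equiv (ℤ√d))).toEquiv

theorem classNumSqrt_sq_mul {b : ℤ} (hb : b ≠ 0) (d : ℤ) :
    classNumSqrt (b ^ 2 * d) = classNumSqrt d :=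
  congrArg (fun K : IntermediateField ℚ ℂ => Nat.card (ClassGroup (NumberField.RingOfIntegers K)))
    (Qsqrt.sq_mul hb d)

theorem eq_one_or_neg_one_of_isUnit_zsqrtd {d : ℤ} (hd : d < -1) {u : ℤ√d} (hu : IsUnit u) :
    u = 1 ∨ u = -1 := by
  have hnorm : u.re * u.re - d * u.im * u.im = 1 :=
    (Zsqrtd.norm_eq_one_iff' (by linarith) u).2 hu
  have him : u.im = 0 := by
    by_contra h
    nlinarith [sq_pos_of_ne_zero h, mul_self_nonneg u.re]
  have hre : u.re = 1 ∨ u.re = -1 := by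
    rw [← mul_self_eq_one_iff]
    simpa only [him, mul_zero, sub_zero] using hnorm
  simpa [Zsqrtd.ext_iff, him] using hre

theorem exists_pow_eq_of_associated_zsqrtd {d : ℤ} (hd : d < -1) {p : ℕ} (hp : Odd p)
    {γ a : ℤ√d} (h : Associated (γ ^ p) a) : ∃ δ : ℤ√d, δ ^ p = a := by
  obtain ⟨u, rfl⟩ := h
  refine ⟨γ * u, ?_⟩
  rcases eq_one_or_neg_one_of_isUnit_zsqrtd hd u.isUnit with hu | hu <;>
    simp [hu, hp.neg_pow]

theorem dvd_classNumSqrt_of_one_sub_eq_pow {d : ℤ} (hd : Squarefree d) (hd4 : d % 4 ≠ 1)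
    (hd1 : d < -1) {b m : ℤ} {n : ℕ} (hn : Odd n) (hm : Odd m) (h : 1 - d * b ^ 2 = m ^ n)
    (hroot : ∀ p : ℕ, p.Prime → p ∣ n → ∀ γ : ℤ√d, γ ^ p ≠ ⟨1, b⟩) :
    n ∣ classNumSqrt d := by
  have := Qsqrt.isDedekindDomain_zsqrtd hd hd4
  rw [classNumSqrt_eq_card_classGroup hd hd4]
  set a : ℤ√d := ⟨1, b⟩ with ha
  have hmul : a * star a = (m : ℤ√d) ^ n := by
    rw [← Zsqrtd.norm_eq_mul_conj, ← Int.cast_pow, ← h, ha, Zsqrtd.norm_def]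
    ring_nf
  have hcop : IsCoprime a (star a) := by
    obtain ⟨j, hj⟩ := hm.pow (n := n)
    have hsum : a + star a = 2 := by ext <;> simp [ha]
    have hnorm : a * star a = 2 * j + 1 := by rw [hmul, ← Int.cast_pow, hj]; push_cast; rfl
    exact ⟨star a - j, -j, by linear_combination hnorm - (j : ℤ√d) * hsum⟩
  have ha0 : a ≠ 0 := by simp [ha, Zsqrtd.ext_iff]
  refine dvd_card_classGroup_of_mul_eq_pow hn.pos ha0 hcop hmul fun p hp hpn γ hγ => ?_
  obtain ⟨δ, hδ⟩ := exists_pow_eq_of_associated_zsqrtd hd1 (hn.of_dvd_nat hpn) hγ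
  exact hroot p hp hpn δ hδ

theorem re_dvd_re_pow_of_odd {d : ℤ} (z : ℤ√d) {j : ℕ} (hj : Odd j) : z.re ∣ (z ^ j).re := by
  have htrace (w : ℤ√d) : w + star w = (2 * w.re : ℤ) := by
    ext <;> simp [two_mul]
  have hdvd : ((2 * z.re : ℤ) : ℤ√d) ∣ (2 * (z ^ j).re : ℤ) := by
    rw [← htrace, ← htrace, star_pow]
    exact hj.add_dvd_pow_add_pow z (star z)
  exact Int.dvd_of_mul_dvd_mul_left two_ne_zero ((Zsqrtd.intCast_dvd_intCast _ _).1 hdvd)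

theorem re_pow_modEq {d e M : ℤ} {z : ℤ√d} {w : ℤ√e} (hre : z.re = w.re)
    (him : d * z.im ^ 2 ≡ e * w.im ^ 2 [ZMOD M]) (j : ℕ) :
    (z ^ j).re ≡ (w ^ j).re [ZMOD M] := by
  suffices (z ^ j).re ≡ (w ^ j).re [ZMOD M] ∧
      d * z.im * (z ^ j).im ≡ e * w.im * (w ^ j).im [ZMOD M] from this.1
  induction j with
  | zero => simp
  | succ j ih =>
    obtain ⟨ihre, ihim⟩ := ih
    simp only [pow_succ, Zsqrtd.re_mul, Zsqrtd.im_mul, hre]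
    constructor
    · convert (ihre.mul_right w.re).add ihim using 1 <;> ring
    · convert (ihre.mul him).add (ihim.mul_right w.re) using 1 <;> ring

/-- The Pell numbers `0, 1, 2, 5, 12, …`, the coefficients of `√2` in the powers of `1 + √2`. -/
def pellNumber : ℕ → ℕ
  | 0 => 0
  | 1 => 1
  | r + 2 => 2 * pellNumber (r + 1) + pellNumber r

namespace pellNumber

theorem succ_succ (r : ℕ) :
    pellNumber (r + 2) = 2 * pellNumber (r + 1) + pellNumber r := rfl

theorem le_succ (r : ℕ) : pellNumber r ≤ pellNumber (r + 1) := by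
  cases r with
  | zero => exact zero_le_one
  | succ r => rw [succ_succ]; omega

theorem pos {r : ℕ} (hr : r ≠ 0) : 0 < pellNumber r :=
  monotone_nat_of_le_succ le_succ (Nat.one_le_iff_ne_zero.2 hr)

theorem succ_le_four_pow (r : ℕ) : pellNumber (r + 1) ≤ 4 ^ r := by
  induction r with
  | zero => exact le_rfl
  | succ r ih =>
    have := le_succ r
    rw [succ_succ, pow_succ]
    omega

theorem coprime_succ (r : ℕ) : (pellNumber r).Coprime (pellNumber (r + 1)) := by
  induction r with
  | zero => exact Nat.coprime_one_right 0
  | succ r ih => simpa [succ_succ] using ih.symm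

theorem one_add_sqrt_two_pow (r : ℕ) :
    (⟨1, 1⟩ : ℤ√2) ^ r = ⟨pellNumber (r + 1) - pellNumber r, pellNumber r⟩ := by
  induction r with
  | zero => rfl
  | succ r ih =>
    rw [pow_succ, ih, succ_succ]
    ext
    · simp only [Zsqrtd.re_mul, Nat.cast_add, Nat.cast_mul]
      push_cast
      ring
    · simp

theorem re_one_add_sqrt_two_pow_odd (r : ℕ) :
    ((⟨1, 1⟩ : ℤ√2) ^ (2 * r + 1)).re = (-1) ^ r + 4 * (pellNumber r * pellNumber (r + 1)) := by
  have hnorm : (pellNumber (r + 1) - pellNumber r : ℤ) ^ 2 - 2 * pellNumber r ^ 2 = (-1) ^ r := by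
    have h := map_pow Zsqrtd.normMonoidHom (⟨1, 1⟩ : ℤ√2) r
    rw [one_add_sqrt_two_pow] at h
    change Zsqrtd.norm _ = (-1) ^ r at h
    rw [← h, Zsqrtd.norm_def]
    ring
  rw [pow_succ, mul_comm 2, pow_mul, one_add_sqrt_two_pow, sq]
  simp only [Zsqrtd.re_mul, Zsqrtd.im_mul]
  linear_combination hnorm

end pellNumber

theorem not_pow_dvd_mul_of_coprime {k n a b : ℕ} (hk : k ≠ 1) (hab : a.Coprime b) (ha0 : 0 < a)
    (hb0 : 0 < b) (ha : a < 2 ^ n) (hb : b < 2 ^ n) : ¬ k ^ n ∣ a * b := by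
  intro hdvd
  have hn : n ≠ 0 := by
    rintro rfl
    omega
  have hprime := Nat.minFac_prime hk
  have hle : 2 ^ n ≤ k.minFac ^ n := Nat.pow_le_pow_left hprime.two_le n
  rcases (hab.isPrimePow_dvd_mul (hprime.isPrimePow.pow hn)).1
      ((pow_dvd_pow_of_dvd k.minFac_dvd n).trans hdvd) with h | h
  · exact (Nat.le_of_dvd ha0 h).not_gt (ha.trans_le hle)
  · exact (Nat.le_of_dvd hb0 h).not_gt (hb.trans_le hle)

theorem not_pow_dvd_pellNumber_mul_succ {k n r : ℕ} (hk : k ≠ 1) (hr : r ≠ 0)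
    (hrn : 2 * r + 1 ≤ n) : ¬ k ^ n ∣ pellNumber r * pellNumber (r + 1) := by
  have hlt : pellNumber (r + 1) < 2 ^ n := calc
    pellNumber (r + 1) ≤ 4 ^ r := pellNumber.succ_le_four_pow r
    _ = 2 ^ (2 * r) := by rw [pow_mul]; norm_num
    _ < 2 ^ n := Nat.pow_lt_pow_right one_lt_two (by omega)
  exact not_pow_dvd_mul_of_coprime hk (pellNumber.coprime_succ r) (pellNumber.pos hr)
    (pellNumber.pos r.succ_ne_zero) ((pellNumber.le_succ r).trans_lt hlt) hlt

theorem re_pow_ne_one_of_norm_modEq_neg_one {d : ℤ} {z : ℤ√d} {k n j : ℕ} (hk : k ≠ 1)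
    (hj : Odd j) (hj1 : j ≠ 1) (hjn : j ≤ n) (hnorm : z.norm ≡ -1 [ZMOD 4 * k ^ n]) :
    (z ^ j).re ≠ 1 := by
  intro hone
  obtain ⟨r, rfl⟩ := hj
  have hx : IsUnit z.re := isUnit_of_dvd_one (hone ▸ re_dvd_re_pow_of_odd z (odd_two_mul_add_one r))
  have him : d * z.im ^ 2 ≡ 2 * z.re ^ 2 [ZMOD 4 * k ^ n] := by
    convert hnorm.sub_left (z.re ^ 2) using 1
    · rw [Zsqrtd.norm_def]
      ring
    · rw [Int.isUnit_sq hx]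
      norm_num
  -- Modulo `4 * k ^ n`, the powers of `z` have the same real parts as those of `±(1 + √2)`.
  have hcongr := re_pow_modEq (z := z) (w := (z.re : ℤ√2) * ⟨1, 1⟩) (by simp)
    (by simpa using him) (2 * r + 1)
  have hdvd : (4 * k ^ n : ℤ) ∣
      1 - z.re * ((-1) ^ r + 4 * (pellNumber r * pellNumber (r + 1))) := by
    have hxj : z.re ^ (2 * r + 1) = z.re := by rw [pow_succ, pow_mul, Int.isUnit_sq hx]; simp
    rw [hone, mul_pow, ← Int.cast_pow, hxj, Zsqrtd.re_smul,
      pellNumber.re_one_add_sqrt_two_pow_odd] at hcongr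
    exact hcongr.symm.dvd
  have hsign : z.re * (-1) ^ r = 1 := by
    have h4 := (dvd_mul_right _ _).trans hdvd
    rcases Int.isUnit_iff.1 hx with h | h <;> rcases neg_one_pow_eq_or ℤ r with h' | h' <;>
      rw [h, h'] at h4 ⊢ <;> omega
  have hprod : (4 * k ^ n : ℤ) ∣ 4 * (pellNumber r * pellNumber (r + 1)) := by
    refine hx.neg.dvd_mul_left.1 ?_
    rwa [mul_add, hsign, sub_add_cancel_left, ← neg_mul] at hdvd
  refine not_pow_dvd_pellNumber_mul_succ hk (by omega) hjn ?_
  exact_mod_cast Int.dvd_of_mul_dvd_mul_left four_ne_zero hprod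

theorem exists_eq_sq_mul_squarefree (D : ℤ) : ∃ b d : ℤ, Squarefree d ∧ D = b ^ 2 * d := by
  obtain ⟨a, b, hab, ha⟩ := Nat.sq_mul_squarefree D.natAbs
  rcases D.natAbs_eq with h | h <;> rw [h, ← hab]
  · exact ⟨b, a, Int.squarefree_natCast.2 ha, by push_cast; ring⟩
  · exact ⟨b, -a, Int.squarefree_natAbs.1 (by simpa using ha), by push_cast; ring⟩

theorem odd_and_emod_four_eq_two_of_sq_mul {b d : ℤ} (h : b ^ 2 * d % 4 = 2) :
    Odd b ∧ d % 4 = 2 := by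
  have hb : Odd b := by
    by_contra hb
    have hdvd : 2 ^ 2 ∣ b ^ 2 * d :=
      (pow_dvd_pow_of_dvd (Int.not_odd_iff_even.1 hb).two_dvd 2).mul_right d
    omega
  exact ⟨hb, by simpa [Int.mul_emod, Int.sq_mod_four_eq_one_of_odd hb] using h⟩

theorem dvd_classNumSqrt_one_sub_pow {k n : ℕ} (hk : 2 ≤ k) (hn : Odd n) :
    n ∣ classNumSqrt (1 - (4 * k ^ n - 1) ^ n) := by
  set m : ℤ := 4 * k ^ n - 1 with hm
  have hkn : (1 : ℤ) ≤ k ^ n := mod_cast Nat.one_le_pow n k (by omega)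
  have hmpow {j : ℕ} (hj : Odd j) : m ^ j ≡ -1 [ZMOD 4 * k ^ n] := by
    rw [← hj.neg_one_pow]
    exact (Int.modEq_iff_dvd.2 ⟨-1, by rw [hm]; ring⟩ : m ≡ -1 [ZMOD 4 * k ^ n]).pow j
  obtain ⟨b, d, hd, hD⟩ := exists_eq_sq_mul_squarefree (1 - m ^ n)
  obtain ⟨hb, hd4⟩ : Odd b ∧ d % 4 = 2 := by
    refine odd_and_emod_four_eq_two_of_sq_mul (hD ▸ ?_)
    have hmod : m ^ n % 4 = -1 % 4 := (hmpow hn).of_mul_right (k ^ n)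
    omega
  have hd0 : d < 0 := by
    have hmn : 1 < m ^ n := one_lt_pow₀ (by omega) hn.pos.ne'
    by_contra! h
    nlinarith [mul_nonneg (sq_nonneg b) h]
  have hb0 : b ≠ 0 := by
    rintro rfl
    exact Int.not_odd_zero hb
  rw [hD, classNumSqrt_sq_mul hb0]
  refine dvd_classNumSqrt_of_one_sub_eq_pow hd (by omega) (by omega) hn (m := m)
    ⟨2 * k ^ n - 1, by rw [hm]; ring⟩ (b := b) (by linarith) fun p hp hpn γ hγ => ?_
  have hpodd := hn.of_dvd_nat hpn
  have hnorm : γ.norm = m ^ (n / p) := by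
    have hmap : (γ ^ p).norm = γ.norm ^ p := map_pow Zsqrtd.normMonoidHom γ p
    rw [← hpodd.pow_inj, ← pow_mul, Nat.div_mul_cancel hpn, ← hmap, hγ, Zsqrtd.norm_def]
    linear_combination hD
  refine re_pow_ne_one_of_norm_modEq_neg_one (by omega) hpodd hp.ne_one
    (Nat.le_of_dvd hn.pos hpn) (hnorm ▸ hmpow (hn.of_dvd_nat (Nat.div_dvd_of_dvd hpn))) ?_
  rw [hγ]

/-- Let `n ≥ 3` be an odd integer, `k ≥ 2` an integer, and `d = 4(1 − 4kⁿ)ⁿ`. Then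
`d + 4 = 4(1 − (4kⁿ − 1)ⁿ)`, so `ℚ(√(d + 4)) = ℚ(√(1 − (4kⁿ − 1)ⁿ))`, and `n` divides the
class number of `ℚ(√(d + 4))`. -/
theorem classNumber_dvd_d_add_four
    (n : ℕ) (hn : 3 ≤ n) (hnodd : Odd n) (k : ℤ) (hk : 2 ≤ k)
    (d : ℤ) (hd : d = 4 * (1 - 4 * k ^ n) ^ n) :
    d + 4 = 4 * (1 - (4 * k ^ n - 1) ^ n) ∧
      Qsqrt (d + 4) = Qsqrt (1 - (4 * k ^ n - 1) ^ n) ∧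
      n ∣ classNumSqrt (d + 4) := by
  have hd4 : d + 4 = 4 * (1 - (4 * k ^ n - 1) ^ n) := by
    rw [hd, ← neg_sub, hnodd.neg_pow]
    ring
  have hsq : d + 4 = 2 ^ 2 * (1 - (4 * k ^ n - 1) ^ n) := by
    rw [hd4]
    norm_num
  refine ⟨hd4, hsq ▸ Qsqrt.sq_mul two_ne_zero _, ?_⟩
  rw [hsq, classNumSqrt_sq_mul two_ne_zero]
  lift k to ℕ using by omega
  exact dvd_classNumSqrt_one_sub_pow (mod_cast hk) hnodd
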